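/- Fix d ∈ ℕ, a smooth function U : ℝ^d → ℝ with ‖∇²U‖_∞ < ∞, and a constant σ > 0, and let L be the kinetic Langevin operator L h = −y·∇_x h + (∇U(x) − y/σ)·∇_y h + Δ_y h. Set β = 1/2 + (‖∇²U‖_∞ + 1 + 1/σ)², A = ∇_x + ∇_y, and Ψ(h) = |Ah|² + β h². Let μ be a probability measure on ℝ^{2d} satisfying the Poincaré inequality ∫(h − ∫h dμ)² dμ ≤ λ ∫ |∇h|² dμ for all smooth compactly supported h, for some λ > 0. Then for every smooth compactly supported h : ℝ^{2d} → ℝ, setting g = h − ∫h dμ, one has ∫ [ (1/2) L(Ψ(g)) − (Ag)·A(Lg) − β g Lg ] dμ ≥ (1/(2(2 + βλ))) ∫ Ψ(g) dμ. -/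

import Mathlib

noncomputable section

open scoped BigOperators
open MeasureTheory

open scoped BigOperators

/-- Partial derivative in the `i`-th `x`-direction of `f : ℝ^d × ℝ^d → ℝ`. -/
def pdx {d : ℕ} (i : Fin d) (f : (Fin d → ℝ) × (Fin d → ℝ) → ℝ)
    (z : (Fin d → ℝ) × (Fin d → ℝ)) : ℝ :=
  fderiv ℝ f z (Pi.single i (1 : ℝ), 0)

/-- Partial derivative in the `i`-th `y`-direction of `f : ℝ^d × ℝ^d → ℝ`. -/
def pdy {d : ℕ} (i : Fin d) (f : (Fin d → ℝ) × (Fin d → ℝ) → ℝ)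
    (z : (Fin d → ℝ) × (Fin d → ℝ)) : ℝ :=
  fderiv ℝ f z (0, Pi.single i (1 : ℝ))

/-- `i`-th component of `∇U`. -/
def gradU {d : ℕ} (U : (Fin d → ℝ) → ℝ) (i : Fin d) (x : Fin d → ℝ) : ℝ :=
  fderiv ℝ U x (Pi.single i (1 : ℝ))

/-- `(i,j)` entry of the Hessian matrix `∇²U`. -/
def hessU {d : ℕ} (U : (Fin d → ℝ) → ℝ) (i j : Fin d) (x : Fin d → ℝ) : ℝ :=
  fderiv ℝ (fun u => fderiv ℝ U u (Pi.single j (1 : ℝ))) x (Pi.single i (1 : ℝ))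

/-- The kinetic Langevin operator `L h = −y·∇ₓh + (∇U(x) − y/σ)·∇_y h + Δ_y h`. -/
def langevin {d : ℕ} (U : (Fin d → ℝ) → ℝ) (σ : ℝ)
    (f : (Fin d → ℝ) × (Fin d → ℝ) → ℝ) (z : (Fin d → ℝ) × (Fin d → ℝ)) : ℝ :=
  (∑ i, -(z.2 i) * pdx i f z)
    + (∑ i, (gradU U i z.1 - z.2 i / σ) * pdy i f z)
    + ∑ i, pdy i (fun w => pdy i f w) z

/-- The supremum over x of the Frobenius norm of the Hessian of U, i.e. ‖∇²U‖_∞. -/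
def hessNormInf {d : ℕ} (U : (Fin d → ℝ) → ℝ) : ℝ :=
  ⨆ x : Fin d → ℝ, Real.sqrt (∑ i, ∑ j, (hessU U i j x) ^ 2)

/-- β = 1/2 + (‖∇²U‖_∞ + 1 + 1/σ)². -/
def betaC {d : ℕ} (U : (Fin d → ℝ) → ℝ) (σ : ℝ) : ℝ :=
  1 / 2 + (hessNormInf U + 1 + 1 / σ) ^ 2

/-- Ψ(g) = |(∇ₓ + ∇_y)g|² + β g². -/
def PsiFn {d : ℕ} (U : (Fin d → ℝ) → ℝ) (σ : ℝ)
    (g : (Fin d → ℝ) × (Fin d → ℝ) → ℝ) (w : (Fin d → ℝ) × (Fin d → ℝ)) : ℝ :=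
  (∑ i, (pdx i g w + pdy i g w) ^ 2) + betaC U σ * (g w) ^ 2

/-- The centering g = h − ∫ h dμ. -/
def gfun {d : ℕ} (μ : Measure ((Fin d → ℝ) × (Fin d → ℝ)))
    (h : (Fin d → ℝ) × (Fin d → ℝ) → ℝ) : (Fin d → ℝ) × (Fin d → ℝ) → ℝ :=
  fun z => h z - ∫ w, h w ∂μ

/-!
Write `L f = b · ∇f + Δ_y f` with drift `b = (-y, ∇U(x) - y/σ)`. In the distorted dissipation only
the carré du champ of each square and the commutator `[A, L]g`, which is the derivative of `b` along
`A` contracted with `∇g`, survive: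
`Γ(g) = |∇_y A g|² + ⟨Ag, ∇ₓg + σ⁻¹∇_y g - ∇²U ∇_y g⟩ + β|∇_y g|²`.
Writing the inner product as a difference of squares in two different ways shows that `2Γ(g)`
dominates both `|Ag|²` and `|∇g|²`. By the Poincaré inequality the second bound controls `β ∫ g²`,
so that `∫ Ψ(g) ≤ 2(1 + βλ) ∫ Γ(g)`.
-/

section DirectionalDerivative

variable {E : Type*} [NormedAddCommGroup E] [NormedSpace ℝ E] {f g : E → ℝ}

/-- The derivative of `f` in the direction `v`, as an operator on functions. The operators
`pdx i`, `pdy i` and `gradU · i` are instances of it by definition. -/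
def dirDeriv (v : E) (f : E → ℝ) (z : E) : ℝ :=
  fderiv ℝ f z v

lemma contDiff_dirDeriv {m n : WithTop ℕ∞} (hf : ContDiff ℝ n f) (hmn : m + 1 ≤ n) (v : E) :
    ContDiff ℝ m (dirDeriv v f) :=
  (hf.fderiv_right hmn).clm_apply contDiff_const

lemma differentiable_dirDeriv (hf : ContDiff ℝ 2 f) (v : E) : Differentiable ℝ (dirDeriv v f) :=
  (contDiff_dirDeriv (m := 1) hf (by norm_num) v).differentiable one_ne_zero

lemma continuous_dirDeriv (hf : ContDiff ℝ 1 f) (v : E) : Continuous (dirDeriv v f) :=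
  (contDiff_dirDeriv (m := 0) hf (by norm_num) v).continuous

lemma hasCompactSupport_dirDeriv (hf : HasCompactSupport (fderiv ℝ f)) (v : E) :
    HasCompactSupport (dirDeriv v f) :=
  hf.comp_left (g := fun T : E →L[ℝ] ℝ => T v) rfl

lemma dirDeriv_add_dir (v w : E) (f : E → ℝ) (z : E) :
    dirDeriv (v + w) f z = dirDeriv v f z + dirDeriv w f z :=
  map_add _ v w

lemma dirDeriv_fun_add (hf : Differentiable ℝ f) (hg : Differentiable ℝ g) (v : E) :
    dirDeriv v (fun w => f w + g w) = fun w => dirDeriv v f w + dirDeriv v g w := by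
  funext w
  simp only [dirDeriv, fderiv_fun_add (hf w) (hg w), add_apply]

lemma dirDeriv_fun_mul (hf : Differentiable ℝ f) (hg : Differentiable ℝ g) (v : E) :
    dirDeriv v (fun w => f w * g w) = fun w => f w * dirDeriv v g w + dirDeriv v f w * g w := by
  funext w
  simp [dirDeriv, fderiv_fun_mul (hf w) (hg w), mul_comm]

lemma dirDeriv_const_mul (c : ℝ) (hf : Differentiable ℝ f) (v : E) :
    dirDeriv v (fun w => c * f w) = fun w => c * dirDeriv v f w := by
  funext w
  simp [dirDeriv, fderiv_const_mul (hf w) c]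

lemma dirDeriv_fun_sum {κ : Type*} (s : Finset κ) {F : κ → E → ℝ}
    (hF : ∀ k ∈ s, Differentiable ℝ (F k)) (v : E) :
    dirDeriv v (fun w => ∑ k ∈ s, F k w) = fun w => ∑ k ∈ s, dirDeriv v (F k) w := by
  funext w
  simp [dirDeriv, fderiv_fun_sum fun k hk => hF k hk w]

lemma differentiable_fderiv (hf : ContDiff ℝ 2 f) : Differentiable ℝ (fderiv ℝ f) :=
  (hf.fderiv_right (m := 1) (by norm_num)).differentiable one_ne_zero

lemma dirDeriv_dirDeriv (hf : ContDiff ℝ 2 f) (v w z : E) :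
    dirDeriv v (dirDeriv w f) z = fderiv ℝ (fderiv ℝ f) z v w := by
  change fderiv ℝ (fun z => fderiv ℝ f z w) z v = _
  simp [fderiv_clm_apply (differentiable_fderiv hf z) (differentiableAt_const w)]

lemma dirDeriv_comm (hf : ContDiff ℝ 2 f) (v w : E) :
    dirDeriv v (dirDeriv w f) = dirDeriv w (dirDeriv v f) := by
  funext z
  have hsymm : IsSymmSndFDerivAt ℝ f z := hf.contDiffAt.isSymmSndFDerivAt (by simp)
  rw [dirDeriv_dirDeriv hf, dirDeriv_dirDeriv hf, hsymm.eq]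

end DirectionalDerivative

section DriftDiffusion

variable {E ι κ : Type*} [NormedAddCommGroup E] [NormedSpace ℝ E] [Fintype ι] [Fintype κ]
  {b : E → E} {e : ι → E} {f g : E → ℝ}

/-- The second-order differential operator `f ↦ b · ∇f + ∑ⱼ ∂²f/∂eⱼ²` with drift field `b` and
diffusion directions `e`, of which the kinetic Langevin operator is a degenerate instance. -/
def driftDiffusion (b : E → E) (e : ι → E) (f : E → ℝ) (z : E) : ℝ :=
  dirDeriv (b z) f z + ∑ j, dirDeriv (e j) (dirDeriv (e j) f) z

lemma driftDiffusion_fun_add (hf : ContDiff ℝ 2 f) (hg : ContDiff ℝ 2 g) (z : E) :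
    driftDiffusion b e (fun w => f w + g w) z
      = driftDiffusion b e f z + driftDiffusion b e g z := by
  have hadd := dirDeriv_fun_add (hf.differentiable two_ne_zero) (hg.differentiable two_ne_zero)
  simp only [driftDiffusion, hadd, Finset.sum_add_distrib,
    dirDeriv_fun_add (differentiable_dirDeriv hf _) (differentiable_dirDeriv hg _)]
  ring

lemma driftDiffusion_const_mul (c : ℝ) (hf : ContDiff ℝ 2 f) (z : E) :
    driftDiffusion b e (fun w => c * f w) z = c * driftDiffusion b e f z := by
  simp only [driftDiffusion, dirDeriv_const_mul c (hf.differentiable two_ne_zero),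
    dirDeriv_const_mul c (differentiable_dirDeriv hf _), mul_add, Finset.mul_sum]

lemma driftDiffusion_fun_sum {F : κ → E → ℝ} (hF : ∀ k, ContDiff ℝ 2 (F k)) (z : E) :
    driftDiffusion b e (fun w => ∑ k, F k w) z = ∑ k, driftDiffusion b e (F k) z := by
  have hsum := dirDeriv_fun_sum Finset.univ fun k _ => (hF k).differentiable two_ne_zero
  have hsum₂ (v : E) := dirDeriv_fun_sum Finset.univ fun k _ => differentiable_dirDeriv (hF k) v
  simp only [driftDiffusion, hsum, hsum₂, Finset.sum_add_distrib]
  rw [Finset.sum_comm]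

lemma driftDiffusion_sq (hf : ContDiff ℝ 2 f) (z : E) :
    driftDiffusion b e (fun w => f w ^ 2) z
      = 2 * (f z * driftDiffusion b e f z) + 2 * ∑ j, dirDeriv (e j) f z ^ 2 := by
  have hd := hf.differentiable two_ne_zero
  have hd₁ := differentiable_dirDeriv hf
  have hsq (v : E) : dirDeriv v (fun w => f w ^ 2) = fun w => 2 * (f w * dirDeriv v f w) := by
    simp only [sq, dirDeriv_fun_mul hd hd]
    funext w
    ring
  simp only [driftDiffusion, hsq, dirDeriv_const_mul 2 (hd.fun_mul (hd₁ _)),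
    dirDeriv_fun_mul hd (hd₁ _), ← Finset.mul_sum, Finset.sum_add_distrib, ← sq]
  ring

lemma dirDeriv_drift (hf : ContDiff ℝ 2 f) {z : E} (hb : DifferentiableAt ℝ b z) (v : E) :
    dirDeriv v (fun w => dirDeriv (b w) f w) z
      = dirDeriv (b z) (dirDeriv v f) z + dirDeriv (fderiv ℝ b z v) f z := by
  rw [← dirDeriv_comm hf v (b z), dirDeriv_dirDeriv hf]
  simp only [dirDeriv, fderiv_clm_apply (differentiable_fderiv hf z) hb]
  simp [add_comm]

lemma dirDeriv_driftDiffusion (hf : ContDiff ℝ 3 f) (hb : Differentiable ℝ b) (v : E) (z : E) :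
    dirDeriv v (driftDiffusion b e f) z
      = driftDiffusion b e (dirDeriv v f) z + dirDeriv (fderiv ℝ b z v) f z := by
  have hf₂ : ContDiff ℝ 2 f := hf.of_le (by norm_num)
  have hd₁ (w : E) : ContDiff ℝ 2 (dirDeriv w f) := contDiff_dirDeriv hf (by norm_num) w
  have hd₂ (w : E) := differentiable_dirDeriv (hd₁ w) w
  have hdrift : Differentiable ℝ fun w => dirDeriv (b w) f w :=
    (differentiable_fderiv hf₂).clm_apply hb
  have hsecond (w : E) :
      dirDeriv v (dirDeriv w (dirDeriv w f)) = dirDeriv w (dirDeriv w (dirDeriv v f)) := by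
    rw [dirDeriv_comm (hd₁ w), dirDeriv_comm hf₂ v w]
  unfold driftDiffusion
  simp only [dirDeriv_fun_add hdrift (.fun_sum fun j _ => hd₂ (e j)), dirDeriv_drift hf₂ (hb z),
    dirDeriv_fun_sum _ fun j _ => hd₂ (e j), hsecond]
  ring

/-- The distorted dissipation `Γ_{L,Ψ}(f)` of an operator `L` for the quadratic functional
`Ψ(f) = ∑ₖ (∂f/∂vₖ)² + β f²`. -/
def distortedDissipation (L : (E → ℝ) → E → ℝ) (v : κ → E) (β : ℝ) (f : E → ℝ) (z : E) : ℝ :=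
  1 / 2 * L (fun w => ∑ k, dirDeriv (v k) f w ^ 2 + β * f w ^ 2) z
    - ∑ k, dirDeriv (v k) f z * dirDeriv (v k) (L f) z - β * f z * L f z

lemma distortedDissipation_driftDiffusion (hf : ContDiff ℝ 3 f) (hb : Differentiable ℝ b)
    (v : κ → E) (β : ℝ) (z : E) :
    distortedDissipation (driftDiffusion b e) v β f z
      = ∑ k, ∑ j, dirDeriv (e j) (dirDeriv (v k) f) z ^ 2
        - ∑ k, dirDeriv (v k) f z * dirDeriv (fderiv ℝ b z (v k)) f z
        + β * ∑ j, dirDeriv (e j) f z ^ 2 := by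
  have hf₂ : ContDiff ℝ 2 f := hf.of_le (by norm_num)
  have hd (k : κ) : ContDiff ℝ 2 (dirDeriv (v k) f) := contDiff_dirDeriv hf (by norm_num) _
  rw [distortedDissipation,
    driftDiffusion_fun_add (.sum fun k _ => (hd k).pow 2) (contDiff_const.mul (hf₂.pow 2)),
    driftDiffusion_fun_sum fun k => (hd k).pow 2, driftDiffusion_const_mul β (hf₂.pow 2),
    driftDiffusion_sq hf₂]
  simp only [driftDiffusion_sq (hd _), dirDeriv_driftDiffusion hf hb, mul_add,
    Finset.sum_add_distrib, ← Finset.mul_sum]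
  ring

end DriftDiffusion

section Coercivity

open WithLp Matrix

lemma norm_toLp_mulVec_le {m n : Type*} [Fintype m] [Fintype n] (A : Matrix m n ℝ) (v : n → ℝ) :
    ‖toLp 2 (A *ᵥ v)‖ ≤ √(∑ i, ∑ j, A i j ^ 2) * ‖toLp 2 v‖ := by
  open scoped Matrix.Norms.Frobenius in
  have hA : ‖A‖ = √(∑ i, ∑ j, A i j ^ 2) := by
    simp [frobenius_norm_def, Real.sqrt_eq_rpow]
  have hmul := frobenius_norm_mul A (replicateCol Unit v)
  rwa [← replicateCol_mulVec, frobenius_norm_replicateCol, frobenius_norm_replicateCol, hA] at hmul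

variable {V : Type*} [NormedAddCommGroup V] [InnerProductSpace ℝ V] {K r : ℝ}

lemma sq_norm_add_le_two_mul_inner (hr : 0 ≤ r) (x y u : V) (hu : ‖u‖ ≤ K * ‖y‖) :
    ‖x + y‖ ^ 2
      ≤ 2 * (inner ℝ (x + y) (x + r • y - u) + (1 / 2 + (K + 1 + r) ^ 2) * ‖y‖ ^ 2) := by
  have hpolar : 2 * inner ℝ (x + y) (x + r • y - u)
      = ‖x + y‖ ^ 2 + ‖x + r • y - u‖ ^ 2 - ‖(1 - r) • y + u‖ ^ 2 := by
    have hdiff : (1 - r) • y + u = (x + y) - (x + r • y - u) := by module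
    rw [hdiff, norm_sub_sq_real (x + y)]
    ring
  have hnorm : ‖(1 - r) • y + u‖ ≤ (K + 1 + r) * ‖y‖ := calc
    _ ≤ |1 - r| * ‖y‖ + K * ‖y‖ := norm_add_le_of_le (norm_smul_le _ _) hu
    _ ≤ (1 + r) * ‖y‖ + K * ‖y‖ := by gcongr; exact abs_le.2 ⟨by linarith, by linarith⟩
    _ = (K + 1 + r) * ‖y‖ := by ring
  have hsq : ‖(1 - r) • y + u‖ ^ 2 ≤ (K + 1 + r) ^ 2 * ‖y‖ ^ 2 := by
    rw [← mul_pow]; gcongr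
  have : 0 ≤ (1 + (K + 1 + r) ^ 2) * ‖y‖ ^ 2 := by positivity
  linarith [sq_nonneg ‖x + r • y - u‖]

lemma sq_norm_add_sq_norm_le_two_mul_inner (hK : 0 ≤ K) (hr : 0 ≤ r) (x y u : V)
    (hu : ‖u‖ ≤ K * ‖y‖) :
    ‖x‖ ^ 2 + ‖y‖ ^ 2
      ≤ 2 * (inner ℝ (x + y) (x + r • y - u) + (1 / 2 + (K + 1 + r) ^ 2) * ‖y‖ ^ 2) := by
  have hpolar : 2 * inner ℝ (x + y) (x + r • y - u)
      = ‖x‖ ^ 2 + ‖(x + y) + (r • y - u)‖ ^ 2 - ‖y‖ ^ 2 - ‖r • y - u‖ ^ 2 := by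
    rw [norm_add_sq_real (x + y), norm_add_sq_real x, add_sub_assoc, inner_add_right,
      inner_add_left x y x, real_inner_self_eq_norm_sq, real_inner_comm x y]
    ring
  have hnorm : ‖r • y - u‖ ≤ (K + r) * ‖y‖ := calc
    _ ≤ ‖r • y‖ + K * ‖y‖ := norm_sub_le_of_le le_rfl hu
    _ = (K + r) * ‖y‖ := by rw [norm_smul, Real.norm_of_nonneg hr]; ring
  have hsq : ‖r • y - u‖ ^ 2 ≤ (K + r) ^ 2 * ‖y‖ ^ 2 := by
    rw [← mul_pow]; gcongr
  have : 0 ≤ ((K + r) ^ 2 + 4 * (K + r) + 1) * ‖y‖ ^ 2 := by positivity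
  linarith [sq_nonneg ‖(x + y) + (r • y - u)‖]

end Coercivity

section Langevin

variable {d : ℕ} {U : (Fin d → ℝ) → ℝ} {σ : ℝ} {g : (Fin d → ℝ) × (Fin d → ℝ) → ℝ}

/-- The `i`-th coordinate vector of the position variable `x`. -/
def unitX (i : Fin d) : (Fin d → ℝ) × (Fin d → ℝ) :=
  (Pi.single i 1, 0)

/-- The `i`-th coordinate vector of the velocity variable `y`. -/
def unitY (i : Fin d) : (Fin d → ℝ) × (Fin d → ℝ) :=
  (0, Pi.single i 1)

/-- The first-order part `(-y, ∇U(x) - y/σ)` of the kinetic Langevin operator. -/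
def langevinDrift (U : (Fin d → ℝ) → ℝ) (σ : ℝ) (z : (Fin d → ℝ) × (Fin d → ℝ)) :
    (Fin d → ℝ) × (Fin d → ℝ) :=
  (-z.2, fun i => gradU U i z.1 - z.2 i / σ)

/-- The distorted dissipation of the kinetic Langevin operator for `Ψ(g) = |Ag|² + βg²`, with
`A = ∇ₓ + ∇_y` spelled out through `pdx` and `pdy` rather than through `distortedDissipation`. -/
def langevinDissipation (U : (Fin d → ℝ) → ℝ) (σ : ℝ) (g : (Fin d → ℝ) × (Fin d → ℝ) → ℝ)
    (z : (Fin d → ℝ) × (Fin d → ℝ)) : ℝ :=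
  (1 / 2) * langevin U σ (PsiFn U σ g) z
    - (∑ i, (pdx i g z + pdy i g z) * (pdx i (langevin U σ g) z + pdy i (langevin U σ g) z))
    - betaC U σ * g z * langevin U σ g z

lemma dirDeriv_unitX_add_unitY (i : Fin d) (g : (Fin d → ℝ) × (Fin d → ℝ) → ℝ)
    (z : (Fin d → ℝ) × (Fin d → ℝ)) :
    dirDeriv (unitX i + unitY i) g z = pdx i g z + pdy i g z :=
  dirDeriv_add_dir _ _ _ _

lemma dirDeriv_eq_sum (v : (Fin d → ℝ) × (Fin d → ℝ)) (g : (Fin d → ℝ) × (Fin d → ℝ) → ℝ)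
    (z : (Fin d → ℝ) × (Fin d → ℝ)) :
    dirDeriv v g z = ∑ i, v.1 i * pdx i g z + ∑ i, v.2 i * pdy i g z := by
  have hv : v = ∑ i, v.1 i • unitX i + ∑ i, v.2 i • unitY i := by
    ext j <;> simp [unitX, unitY, Prod.fst_sum, Prod.snd_sum, Pi.single_apply]
  conv_lhs => rw [hv]
  simp only [dirDeriv, map_add, map_sum, map_smul, smul_eq_mul]
  rfl

lemma langevin_eq_driftDiffusion (U : (Fin d → ℝ) → ℝ) (σ : ℝ) :
    langevin U σ = driftDiffusion (langevinDrift U σ) unitY := by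
  funext f z
  rw [driftDiffusion, dirDeriv_eq_sum]
  rfl

lemma hasFDerivAt_langevinDrift (hU : ContDiff ℝ 2 U) (σ : ℝ) (z : (Fin d → ℝ) × (Fin d → ℝ)) :
    HasFDerivAt (langevinDrift U σ)
      ((-ContinuousLinearMap.snd ℝ (Fin d → ℝ) (Fin d → ℝ)).prod (.pi fun i =>
        (fderiv ℝ (gradU U i) z.1).comp (.fst ℝ (Fin d → ℝ) (Fin d → ℝ))
          - σ⁻¹ • (ContinuousLinearMap.proj i).comp (.snd ℝ (Fin d → ℝ) (Fin d → ℝ)))) z := by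
  have hgrad (i : Fin d) : HasFDerivAt (gradU U i) (fderiv ℝ (gradU U i) z.1) z.1 :=
    (differentiable_dirDeriv hU (Pi.single i 1) z.1).hasFDerivAt
  have hcoord (i : Fin d) : HasFDerivAt (fun w : (Fin d → ℝ) × (Fin d → ℝ) => w.2 i)
      ((ContinuousLinearMap.proj i).comp (.snd ℝ (Fin d → ℝ) (Fin d → ℝ))) z :=
    hasFDerivAt_pi'.1 hasFDerivAt_snd i
  unfold langevinDrift
  simp only [div_eq_mul_inv]
  exact hasFDerivAt_snd.neg.prodMk <| hasFDerivAt_pi.2 fun i =>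
    ((hgrad i).comp z hasFDerivAt_fst).sub ((hcoord i).mul_const σ⁻¹)

lemma fderiv_langevinDrift_unitX_add_unitY (hU : ContDiff ℝ 2 U) (σ : ℝ) (i : Fin d)
    (z : (Fin d → ℝ) × (Fin d → ℝ)) :
    fderiv ℝ (langevinDrift U σ) z (unitX i + unitY i)
      = (-Pi.single i 1, fun j => hessU U i j z.1 - 1 / σ * (Pi.single i 1 : Fin d → ℝ) j) := by
  rw [(hasFDerivAt_langevinDrift hU σ z).fderiv]
  ext j
  · simp [unitX, unitY]
  · rw [one_div]
    simp only [unitX, unitY, Prod.mk_add_mk, add_zero, zero_add, ContinuousLinearMap.prod_apply,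
      ContinuousLinearMap.coe_pi', sub_apply, ContinuousLinearMap.comp_apply, smul_apply]
    rfl

lemma langevinDissipation_eq_distortedDissipation (U : (Fin d → ℝ) → ℝ) (σ : ℝ)
    (g : (Fin d → ℝ) × (Fin d → ℝ) → ℝ) (z : (Fin d → ℝ) × (Fin d → ℝ)) :
    langevinDissipation U σ g z = distortedDissipation (driftDiffusion (langevinDrift U σ) unitY)
      (fun i => unitX i + unitY i) (betaC U σ) g z := by
  simp only [distortedDissipation, ← langevin_eq_driftDiffusion, dirDeriv_unitX_add_unitY]
  rfl

lemma langevinDissipation_eq (hU : ContDiff ℝ 2 U) (σ : ℝ) (hg : ContDiff ℝ 3 g)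
    (z : (Fin d → ℝ) × (Fin d → ℝ)) :
    langevinDissipation U σ g z
      = ∑ i, ∑ j, dirDeriv (unitY j) (dirDeriv (unitX i + unitY i) g) z ^ 2
        + ∑ i, (pdx i g z + pdy i g z)
            * (pdx i g z + 1 / σ * pdy i g z - ∑ j, hessU U i j z.1 * pdy j g z)
        + betaC U σ * ∑ j, pdy j g z ^ 2 := by
  have hb : Differentiable ℝ (langevinDrift U σ) := fun w =>
    (hasFDerivAt_langevinDrift hU σ w).differentiableAt
  have hcomm (i : Fin d) : dirDeriv (fderiv ℝ (langevinDrift U σ) z (unitX i + unitY i)) g z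
      = -(pdx i g z + 1 / σ * pdy i g z - ∑ j, hessU U i j z.1 * pdy j g z) := by
    rw [fderiv_langevinDrift_unitX_add_unitY hU, dirDeriv_eq_sum]
    simp only [Pi.neg_apply, Pi.single_apply, neg_mul, ite_mul, one_mul, zero_mul, sub_mul,
      mul_ite, mul_one, mul_zero, Finset.sum_neg_distrib, Finset.sum_sub_distrib,
      Finset.sum_ite_eq', Finset.mem_univ, if_true]
    ring
  rw [langevinDissipation_eq_distortedDissipation, distortedDissipation_driftDiffusion hg hb]
  simp only [hcomm, dirDeriv_unitX_add_unitY, mul_neg, Finset.sum_neg_distrib, sub_neg_eq_add]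
  rfl

/-- The position gradient `∇ₓg`, as a Euclidean vector. -/
def gradX (g : (Fin d → ℝ) × (Fin d → ℝ) → ℝ) (z : (Fin d → ℝ) × (Fin d → ℝ)) :
    EuclideanSpace ℝ (Fin d) :=
  WithLp.toLp 2 fun i => pdx i g z

/-- The velocity gradient `∇_y g`, as a Euclidean vector. -/
def gradY (g : (Fin d → ℝ) × (Fin d → ℝ) → ℝ) (z : (Fin d → ℝ) × (Fin d → ℝ)) :
    EuclideanSpace ℝ (Fin d) :=
  WithLp.toLp 2 fun i => pdy i g z

/-- The vector `∇²U(x) ∇_y g`, the contribution of the force `∇U(x) · ∇_y` to the commutator of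
`∇ₓ + ∇_y` with the kinetic Langevin operator. -/
def hessMulGradY (U : (Fin d → ℝ) → ℝ) (g : (Fin d → ℝ) × (Fin d → ℝ) → ℝ)
    (z : (Fin d → ℝ) × (Fin d → ℝ)) : EuclideanSpace ℝ (Fin d) :=
  WithLp.toLp 2 (Matrix.mulVec (.of fun i j => hessU U i j z.1) fun j => pdy j g z)

lemma norm_hessMulGradY_le
    (hK : BddAbove (Set.range fun x : Fin d → ℝ => √(∑ i, ∑ j, hessU U i j x ^ 2)))
    (g : (Fin d → ℝ) × (Fin d → ℝ) → ℝ) (z : (Fin d → ℝ) × (Fin d → ℝ)) :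
    ‖hessMulGradY U g z‖ ≤ hessNormInf U * ‖gradY g z‖ :=
  (norm_toLp_mulVec_le _ _).trans <|
    mul_le_mul_of_nonneg_right (le_ciSup hK z.1) (norm_nonneg _)

lemma inner_add_le_langevinDissipation (hU : ContDiff ℝ 2 U) (σ : ℝ) (hg : ContDiff ℝ 3 g)
    (z : (Fin d → ℝ) × (Fin d → ℝ)) :
    inner ℝ (gradX g z + gradY g z) (gradX g z + (1 / σ) • gradY g z - hessMulGradY U g z)
      + betaC U σ * ‖gradY g z‖ ^ 2 ≤ langevinDissipation U σ g z := by
  have hsecond : 0 ≤ ∑ i, ∑ j, dirDeriv (unitY j) (dirDeriv (unitX i + unitY i) g) z ^ 2 :=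
    Finset.sum_nonneg fun i _ => Finset.sum_nonneg fun j _ => sq_nonneg _
  rw [langevinDissipation_eq hU σ hg, EuclideanSpace.real_norm_sq_eq, PiLp.inner_apply]
  simp only [gradX, gradY, hessMulGradY, Matrix.mulVec, dotProduct, PiLp.add_apply,
    PiLp.sub_apply, PiLp.smul_apply, smul_eq_mul, Real.inner_apply, Matrix.of_apply]
  linarith

lemma hessNormInf_nonneg (U : (Fin d → ℝ) → ℝ) : 0 ≤ hessNormInf U :=
  Real.iSup_nonneg fun _ => Real.sqrt_nonneg _

lemma betaC_pos (U : (Fin d → ℝ) → ℝ) (σ : ℝ) : 0 < betaC U σ := by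
  unfold betaC
  positivity

lemma PsiFn_nonneg (U : (Fin d → ℝ) → ℝ) (σ : ℝ) (g : (Fin d → ℝ) × (Fin d → ℝ) → ℝ)
    (z : (Fin d → ℝ) × (Fin d → ℝ)) : 0 ≤ PsiFn U σ g z := by
  have := betaC_pos U σ
  unfold PsiFn
  positivity

lemma sum_sq_add_le_two_mul_langevinDissipation (hU : ContDiff ℝ 2 U)
    (hK : BddAbove (Set.range fun x : Fin d → ℝ => √(∑ i, ∑ j, hessU U i j x ^ 2)))
    (hσ : 0 < σ) (hg : ContDiff ℝ 3 g) (z : (Fin d → ℝ) × (Fin d → ℝ)) :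
    ∑ i, (pdx i g z + pdy i g z) ^ 2 ≤ 2 * langevinDissipation U σ g z := calc
  _ = ‖gradX g z + gradY g z‖ ^ 2 := by simp [EuclideanSpace.real_norm_sq_eq, gradX, gradY]
  _ ≤ _ := sq_norm_add_le_two_mul_inner (one_div_pos.2 hσ).le _ _ _
    (norm_hessMulGradY_le hK g z)
  _ ≤ _ := by
    gcongr
    exact inner_add_le_langevinDissipation hU σ hg z

lemma sum_sq_add_sum_sq_le_two_mul_langevinDissipation (hU : ContDiff ℝ 2 U)
    (hK : BddAbove (Set.range fun x : Fin d → ℝ => √(∑ i, ∑ j, hessU U i j x ^ 2)))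
    (hσ : 0 < σ) (hg : ContDiff ℝ 3 g) (z : (Fin d → ℝ) × (Fin d → ℝ)) :
    ∑ i, pdx i g z ^ 2 + ∑ i, pdy i g z ^ 2 ≤ 2 * langevinDissipation U σ g z := calc
  _ = ‖gradX g z‖ ^ 2 + ‖gradY g z‖ ^ 2 := by
    simp [EuclideanSpace.real_norm_sq_eq, gradX, gradY]
  _ ≤ _ := sq_norm_add_sq_norm_le_two_mul_inner (hessNormInf_nonneg U) (one_div_pos.2 hσ).le _ _ _
    (norm_hessMulGradY_le hK g z)
  _ ≤ _ := by
    gcongr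
    exact inner_add_le_langevinDissipation hU σ hg z

end Langevin

section Integration

variable {d : ℕ} {U : (Fin d → ℝ) → ℝ} {σ : ℝ} {g : (Fin d → ℝ) × (Fin d → ℝ) → ℝ}
  {μ : Measure ((Fin d → ℝ) × (Fin d → ℝ))}

lemma integrable_fun_mul_of_hasCompactSupport {X : Type*} [TopologicalSpace X]
    [MeasurableSpace X] [OpensMeasurableSpace X] {ν : Measure X} [IsFiniteMeasureOnCompacts ν]
    {f k : X → ℝ} (hf : Continuous f) (hfc : HasCompactSupport f) (hk : Continuous k) :
    Integrable (fun z => f z * k z) ν :=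
  (hf.mul hk).integrable_of_hasCompactSupport hfc.mul_right

lemma integrable_sq_dirDeriv [IsFiniteMeasureOnCompacts μ] (hg : ContDiff ℝ 1 g)
    (hgc : HasCompactSupport (fderiv ℝ g)) (v : (Fin d → ℝ) × (Fin d → ℝ)) :
    Integrable (fun z => dirDeriv v g z ^ 2) μ := by
  simp only [sq]
  exact integrable_fun_mul_of_hasCompactSupport (continuous_dirDeriv hg v)
    (hasCompactSupport_dirDeriv hgc v) (continuous_dirDeriv hg v)

lemma continuous_hessU (hU : ContDiff ℝ 2 U) (i j : Fin d) : Continuous (hessU U i j) :=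
  continuous_dirDeriv (contDiff_dirDeriv hU (by norm_num) (Pi.single j 1)) (Pi.single i 1)

lemma integrable_langevinDissipation [IsFiniteMeasureOnCompacts μ] (hU : ContDiff ℝ 2 U) (σ : ℝ)
    (hg : ContDiff ℝ 3 g) (hgc : HasCompactSupport (fderiv ℝ g)) :
    Integrable (langevinDissipation U σ g) μ := by
  have hg₁ : ContDiff ℝ 1 g := hg.of_le (by norm_num)
  have hAg (i : Fin d) : ContDiff ℝ 2 (dirDeriv (unitX i + unitY i) g) :=
    contDiff_dirDeriv hg (by norm_num) _
  have hx (i : Fin d) : Continuous (pdx i g) := continuous_dirDeriv hg₁ (unitX i)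
  have hy (i : Fin d) : Continuous (pdy i g) := continuous_dirDeriv hg₁ (unitY i)
  have hH (i j : Fin d) :
      Continuous fun z : (Fin d → ℝ) × (Fin d → ℝ) => hessU U i j z.1 :=
    (continuous_hessU hU i j).comp continuous_fst
  rw [funext (langevinDissipation_eq hU σ hg)]
  refine ((integrable_finsetSum _ fun i _ => integrable_finsetSum _ fun j _ => ?_).add
    (integrable_finsetSum _ fun i _ => ?_)).add
    ((integrable_finsetSum _ fun j _ => integrable_sq_dirDeriv hg₁ hgc (unitY j)).const_mul _)
  · exact integrable_sq_dirDeriv ((hAg i).of_le (by norm_num))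
      ((hasCompactSupport_dirDeriv hgc _).fderiv ℝ) (unitY j)
  · simp only [← dirDeriv_unitX_add_unitY]
    exact integrable_fun_mul_of_hasCompactSupport (hAg i).continuous
      (hasCompactSupport_dirDeriv hgc _) (by fun_prop)

lemma fderiv_gfun (μ : Measure ((Fin d → ℝ) × (Fin d → ℝ)))
    (h : (Fin d → ℝ) × (Fin d → ℝ) → ℝ) : fderiv ℝ (gfun μ h) = fderiv ℝ h :=
  funext fun _ => fderiv_sub_const _

lemma integrable_sq_gfun [IsFiniteMeasure μ] {h : (Fin d → ℝ) × (Fin d → ℝ) → ℝ}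
    (hh : Continuous h) (hhc : HasCompactSupport h) : Integrable (fun z => gfun μ h z ^ 2) μ := by
  have hexpand : (fun z => gfun μ h z ^ 2)
      = fun z => h z * (h z - 2 * ∫ w, h w ∂μ) + (∫ w, h w ∂μ) ^ 2 := by
    funext z
    rw [gfun]
    ring
  rw [hexpand]
  exact (integrable_fun_mul_of_hasCompactSupport hh hhc (by fun_prop)).add (integrable_const _)

end Integration

theorem stmt8_general {d : ℕ} {U : (Fin d → ℝ) → ℝ} (hU : ContDiff ℝ 2 U)
    (hK : BddAbove (Set.range fun x : Fin d → ℝ => √(∑ i, ∑ j, hessU U i j x ^ 2)))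
    {σ : ℝ} (hσ : 0 < σ) {μ : Measure ((Fin d → ℝ) × (Fin d → ℝ))} [IsFiniteMeasureOnCompacts μ]
    {lam : ℝ} (hlam : 0 ≤ lam) {g : (Fin d → ℝ) × (Fin d → ℝ) → ℝ} (hg : ContDiff ℝ 3 g)
    (hgc : HasCompactSupport (fderiv ℝ g)) (hg_sq : Integrable (fun z => g z ^ 2) μ)
    (hPoincare : ∫ z, g z ^ 2 ∂μ
      ≤ lam * ∫ z, ((∑ i, pdx i g z ^ 2) + ∑ i, pdy i g z ^ 2) ∂μ) :
    1 / (2 * (1 + betaC U σ * lam)) * ∫ z, PsiFn U σ g z ∂μ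
      ≤ ∫ z, langevinDissipation U σ g z ∂μ := by
  have hβ := betaC_pos U σ
  have hg₁ : ContDiff ℝ 1 g := hg.of_le (by norm_num)
  have hΓ := (integrable_langevinDissipation (μ := μ) hU σ hg hgc).const_mul 2
  have hA : Integrable (fun z => ∑ i, (pdx i g z + pdy i g z) ^ 2) μ := by
    simp only [← dirDeriv_unitX_add_unitY]
    exact integrable_finsetSum _ fun i _ => integrable_sq_dirDeriv hg₁ hgc _
  have hgrad : Integrable (fun z => ∑ i, pdx i g z ^ 2 + ∑ i, pdy i g z ^ 2) μ :=
    (integrable_finsetSum _ fun i _ => integrable_sq_dirDeriv hg₁ hgc (unitX i)).add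
      (integrable_finsetSum _ fun i _ => integrable_sq_dirDeriv hg₁ hgc (unitY i))
  have hA_le := integral_mono hA hΓ (sum_sq_add_le_two_mul_langevinDissipation hU hK hσ hg)
  have hgrad_le := integral_mono hgrad hΓ
    (sum_sq_add_sum_sq_le_two_mul_langevinDissipation hU hK hσ hg)
  rw [integral_const_mul] at hA_le hgrad_le
  rw [one_div, inv_mul_le_iff₀ (by positivity)]
  calc ∫ z, PsiFn U σ g z ∂μ
      = ∫ z, ∑ i, (pdx i g z + pdy i g z) ^ 2 ∂μ + betaC U σ * ∫ z, g z ^ 2 ∂μ := by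
        rw [← integral_const_mul, ← integral_add hA (hg_sq.const_mul _)]
        rfl
    _ ≤ 2 * ∫ z, langevinDissipation U σ g z ∂μ
          + betaC U σ * (lam * (2 * ∫ z, langevinDissipation U σ g z ∂μ)) := by
        gcongr
        exact hPoincare.trans (by gcongr)
    _ = 2 * (1 + betaC U σ * lam) * ∫ z, langevinDissipation U σ g z ∂μ := by ring

/-- If μ is a probability measure on ℝ^{2d} satisfying a Poincaré inequality with
constant λ, then the distorted dissipation of Ψ(g) = |Ag|² + βg² for the kinetic
Langevin operator, integrated against μ, dominates (1/(2(2+βλ))) ∫ Ψ(g) dμ, where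
g = h − ∫h dμ. -/
theorem stmt8 {d : ℕ} (U : (Fin d → ℝ) → ℝ) (hU : ContDiff ℝ (⊤ : ℕ∞) U)
    (hK : BddAbove (Set.range fun x : Fin d → ℝ =>
      Real.sqrt (∑ i, ∑ j, (hessU U i j x) ^ 2)))
    (σ : ℝ) (hσ : 0 < σ)
    (μ : Measure ((Fin d → ℝ) × (Fin d → ℝ))) [IsProbabilityMeasure μ]
    (lam : ℝ) (hlam : 0 < lam)
    (hPoincare : ∀ f : (Fin d → ℝ) × (Fin d → ℝ) → ℝ,
      ContDiff ℝ (⊤ : ℕ∞) f → HasCompactSupport f →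
      ∫ z, (f z - ∫ w, f w ∂μ) ^ 2 ∂μ
        ≤ lam * ∫ z, ((∑ i, (pdx i f z) ^ 2) + ∑ i, (pdy i f z) ^ 2) ∂μ)
    (h : (Fin d → ℝ) × (Fin d → ℝ) → ℝ)
    (hh : ContDiff ℝ (⊤ : ℕ∞) h) (hhc : HasCompactSupport h) :
    ∫ z, ((1 / 2) * langevin U σ (PsiFn U σ (gfun μ h)) z
        - (∑ i, (pdx i (gfun μ h) z + pdy i (gfun μ h) z)
            * (pdx i (langevin U σ (gfun μ h)) z
              + pdy i (langevin U σ (gfun μ h)) z))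
        - betaC U σ * gfun μ h z * langevin U σ (gfun μ h) z) ∂μ
      ≥ (1 / (2 * (2 + betaC U σ * lam))) * ∫ z, PsiFn U σ (gfun μ h) z ∂μ := by
  have hg_sq := integrable_sq_gfun (μ := μ) hh.continuous hhc
  have hβ := betaC_pos U σ
  have hΨ : 0 ≤ ∫ z, PsiFn U σ (gfun μ h) z ∂μ := integral_nonneg (PsiFn_nonneg U σ _)
  have hg : ContDiff ℝ 3 (gfun μ h) := (contDiff_infty.1 hh 3).sub contDiff_const
  have hgc : HasCompactSupport (fderiv ℝ (gfun μ h)) := by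
    rw [fderiv_gfun]
    exact hhc.fderiv ℝ
  refine le_trans ?_ (stmt8_general (contDiff_infty.1 hU 2) hK hσ hlam.le hg hgc hg_sq ?_)
  · gcongr
    norm_num
  · simp only [pdx, pdy, fderiv_gfun]
    exact hPoincare h hh hhc
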